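/- Let p ≥ 1, let A be an m×m matrix and B an n×n matrix of natural numbers, and suppose A and B are both p-multimagic squares. Define the mn×mn matrix A⋆B by (A⋆B)_{mk+i, ml+j} = m²·B_{k,l} + A_{i,j} for 0 ≤ i, j ≤ m−1 and 0 ≤ k, l ≤ n−1 (all matrices indexed from 0). Then A⋆B is a p-multimagic square. -/

import Mathlib

/-!
Write an index of `A ⋆ B` as a pair (block `k`, offset `i`). Every line (row, column, diagonal,
antidiagonal) of `A ⋆ B` is then the product of the corresponding lines of `B` and `A`; for the
antidiagonal this is because reversal acts on the block and on the offset separately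
(`blockEquiv_rev`). Expanding `(m² b + a) ^ d` by the binomial theorem, the `d`-th power sum over
a line of `A ⋆ B` is a fixed combination of the power sums of degree `≤ d` along these lines of
`A` and `B` (`sum_line`), and those do not depend on the line. The degree `0` power sum, which
also occurs, is just the number of entries of a line.
-/

/-- An `m × m` matrix of natural numbers is a magic square if all row sums,
all column sums, the main diagonal sum and the antidiagonal sum are equal. -/
def IsMagicSquare {m : ℕ} (M : Fin m → Fin m → ℕ) : Prop :=
  ∃ S : ℕ,
    (∀ i, (∑ j, M i j) = S) ∧
    (∀ j, (∑ i, M i j) = S) ∧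
    (∑ i, M i i) = S ∧
    (∑ i, M i i.rev) = S

/-- `M` is `p`-multimagic if the entrywise `d`-th power of `M` is magic for `d = 1, …, p`. -/
def IsMultimagic {m : ℕ} (p : ℕ) (M : Fin m → Fin m → ℕ) : Prop :=
  ∀ d, 1 ≤ d → d ≤ p → IsMagicSquare (fun i j => M i j ^ d)

/-- The entrywise power of degree `0` is the all-ones matrix, with line sum `m`, so the lower bound
on `d` can be dropped. -/
theorem IsMultimagic.isMagicSquare_pow {p m : ℕ} {M : Fin m → Fin m → ℕ} (hM : IsMultimagic p M)
    {d : ℕ} (hd : d ≤ p) : IsMagicSquare (fun i j => M i j ^ d) := by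
  rcases Nat.eq_zero_or_pos d with rfl | h
  · exact ⟨m, by simp⟩
  · exact hM d h hd

/-- The indexing `(k, i) ↦ m * k + i` of `Fin (m * n)` by a block `k` and an offset `i`. -/
def blockEquiv (m n : ℕ) : Fin n × Fin m ≃ Fin (m * n) :=
  finProdFinEquiv.trans (finCongr (mul_comm n m))

theorem blockEquiv_val (m n : ℕ) (k : Fin n) (i : Fin m) :
    (blockEquiv m n (k, i) : ℕ) = m * k + i := by
  simp [blockEquiv, add_comm]

theorem blockEquiv_rev (m n : ℕ) (k : Fin n) (i : Fin m) :
    (blockEquiv m n (k, i)).rev = blockEquiv m n (k.rev, i.rev) := by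
  ext
  have hk : (k.rev : ℕ) + k + 1 = n := by rw [Fin.val_rev]; omega
  have hi : (i.rev : ℕ) + i + 1 = m := by rw [Fin.val_rev]; omega
  have h : m * (k.rev : ℕ) + i.rev + (m * k + i + 1) = m * n := by
    calc _ = m * ((k.rev : ℕ) + k) + ((i.rev : ℕ) + i + 1) := by ring
      _ = m * ((k.rev : ℕ) + k + 1) := by rw [hi]; ring
      _ = m * n := by rw [hk]
  rw [Fin.val_rev, blockEquiv_val, blockEquiv_val]
  omega

/-- The `d`-th power sum of the values `c * g k + f i` is determined by the power sums of `f` and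
of `g` of degree at most `d`. -/
theorem sum_line {m n : ℕ} (c d : ℕ) (f : Fin m → ℕ) (g : Fin n → ℕ) (a b : ℕ → ℕ)
    (ha : ∀ e ≤ d, ∑ i, f i ^ e = a e) (hb : ∀ e ≤ d, ∑ k, g k ^ e = b e) :
    ∑ x : Fin n × Fin m, (c * g x.1 + f x.2) ^ d =
      ∑ e ∈ Finset.range (d + 1), c ^ e * b e * a (d - e) * d.choose e := by
  simp_rw [add_pow]
  rw [Finset.sum_comm]
  refine Finset.sum_congr rfl fun e he => ?_
  rw [← ha (d - e) (Nat.sub_le d e), ← hb e (Nat.lt_succ_iff.mp (Finset.mem_range.mp he)),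
    ← Finset.sum_mul, Fintype.sum_prod_type, mul_assoc (c ^ e), Finset.sum_mul_sum]
  simp_rw [Finset.mul_sum, mul_pow, mul_assoc, Nat.cast_id]

/-- If `A` is an `m × m` `p`-multimagic square and `B` an `n × n` `p`-multimagic square,
then the `mn × mn` matrix `A ⋆ B` defined (with `0`-based indices) by
`(A ⋆ B)_{mk+i, ml+j} = m² B_{k,l} + A_{i,j}` for `0 ≤ i, j ≤ m−1`, `0 ≤ k, l ≤ n−1`
is a `p`-multimagic square. -/
theorem star_product_multimagic
    (p m n : ℕ) (A : Fin m → Fin m → ℕ) (B : Fin n → Fin n → ℕ)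
    (hA : IsMultimagic p A) (hB : IsMultimagic p B)
    (C : Fin (m * n) → Fin (m * n) → ℕ)
    (hC : ∀ (i j : Fin m) (k l : Fin n),
      C ⟨m * (k : ℕ) + (i : ℕ), by
            calc m * (k : ℕ) + (i : ℕ) < m * (k : ℕ) + m := Nat.add_lt_add_left i.isLt _
              _ = m * ((k : ℕ) + 1) := by ring
              _ ≤ m * n := Nat.mul_le_mul_left m k.isLt⟩
        ⟨m * (l : ℕ) + (j : ℕ), by
            calc m * (l : ℕ) + (j : ℕ) < m * (l : ℕ) + m := Nat.add_lt_add_left j.isLt _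
              _ = m * ((l : ℕ) + 1) := by ring
              _ ≤ m * n := Nat.mul_le_mul_left m l.isLt⟩
        = m ^ 2 * B k l + A i j) :
    IsMultimagic p C := by
  intro d _ hd
  have hC' : ∀ k i l j, C (blockEquiv m n (k, i)) (blockEquiv m n (l, j)) =
      m ^ 2 * B k l + A i j := by
    intro k i l j
    rw [← hC]
    congr 1 <;> exact Fin.ext (blockEquiv_val ..)
  -- Degrees above `p` never occur; the constants there are arbitrary.
  have hA' : ∀ e, ∃ S, e ≤ p → (∀ i, ∑ j, A i j ^ e = S) ∧ (∀ j, ∑ i, A i j ^ e = S) ∧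
      ∑ i, A i i ^ e = S ∧ ∑ i, A i i.rev ^ e = S := fun e =>
    if h : e ≤ p then (hA.isMagicSquare_pow h).imp fun _ hS _ => hS else ⟨0, fun h' => (h h').elim⟩
  have hB' : ∀ e, ∃ S, e ≤ p → (∀ i, ∑ j, B i j ^ e = S) ∧ (∀ j, ∑ i, B i j ^ e = S) ∧
      ∑ i, B i i ^ e = S ∧ ∑ i, B i i.rev ^ e = S := fun e =>
    if h : e ≤ p then (hB.isMagicSquare_pow h).imp fun _ hS _ => hS else ⟨0, fun h' => (h h').elim⟩
  choose a ha using hA'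
  choose b hb using hB'
  refine ⟨∑ e ∈ Finset.range (d + 1), (m ^ 2) ^ e * b e * a (d - e) * d.choose e,
    fun r => ?_, fun r => ?_, ?_, ?_⟩
  · obtain ⟨⟨k, i⟩, rfl⟩ := (blockEquiv m n).surjective r
    rw [← sum_line (m ^ 2) d (A i) (B k) a b (fun e he => (ha e (he.trans hd)).1 i)
      (fun e he => (hb e (he.trans hd)).1 k), ← (blockEquiv m n).sum_comp]
    exact Finset.sum_congr rfl fun x _ => by rw [← hC']
  · obtain ⟨⟨l, j⟩, rfl⟩ := (blockEquiv m n).surjective r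
    rw [← sum_line (m ^ 2) d (A · j) (B · l) a b (fun e he => (ha e (he.trans hd)).2.1 j)
      (fun e he => (hb e (he.trans hd)).2.1 l), ← (blockEquiv m n).sum_comp]
    exact Finset.sum_congr rfl fun x _ => by rw [← hC']
  · rw [← sum_line (m ^ 2) d (fun i => A i i) (fun k => B k k) a b
      (fun e he => (ha e (he.trans hd)).2.2.1) (fun e he => (hb e (he.trans hd)).2.2.1),
      ← (blockEquiv m n).sum_comp]
    exact Finset.sum_congr rfl fun x _ => by rw [← hC']
  · rw [← sum_line (m ^ 2) d (fun i => A i i.rev) (fun k => B k k.rev) a b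
      (fun e he => (ha e (he.trans hd)).2.2.2) (fun e he => (hb e (he.trans hd)).2.2.2),
      ← (blockEquiv m n).sum_comp]
    exact Finset.sum_congr rfl fun x _ => by rw [blockEquiv_rev, ← hC']
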